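/- Assume the set of well-formed formulas is countable (e.g. there are countably many propositional variables). Let Q be a well-formed formula. Every Q-consistent extension M of the implicational propositional calculus has an extension N that is both Q-complete and Q-consistent. -/

import Mathlib

/-- Well-formed formulas of the implicational propositional calculus:
propositional variables (indexed by ℕ, so the set of wfs is countable)
and the single connective ⊃. -/
inductive Wf where
  | var : ℕ → Wf
  | imp : Wf → Wf → Wf
deriving DecidableEq

infixr:60 " ⊃' " => Wf.imp

/-- `Deduces Γ A` : `A` is deducible from the set `Γ` of extra axioms/hypotheses,
using the three axiom schemes of IPC (including the Peirce scheme) and modus ponens.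
Theorems of IPC are `Deduces ∅ A`; for an extension `M` of IPC with extra-axiom
set `E`, `T(M)` is `Deduces E`, and deducibility from hypotheses `Γ` in `M` is
`Deduces (E ∪ Γ)`. -/
inductive Deduces : Set Wf → Wf → Prop where
  | hyp : ∀ {Γ : Set Wf} {A : Wf}, A ∈ Γ → Deduces Γ A
  | ax1 : ∀ {Γ : Set Wf} (A B : Wf), Deduces Γ (A ⊃' (B ⊃' A))
  | ax2 : ∀ {Γ : Set Wf} (A B C : Wf),
      Deduces Γ ((A ⊃' (B ⊃' C)) ⊃' ((A ⊃' B) ⊃' (A ⊃' C)))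
  | peirce : ∀ {Γ : Set Wf} (A B : Wf), Deduces Γ (((A ⊃' B) ⊃' A) ⊃' A)
  | mp : ∀ {Γ : Set Wf} {A B : Wf}, Deduces Γ (A ⊃' B) → Deduces Γ A → Deduces Γ B

/-!
A deduction uses only finitely many hypotheses, so the sets of wfs from which `Q` is not deducible
form a family of finite character, and the Teichmüller–Tukey lemma extends `E` to a maximal such
set `F`. If `A ∈ F`, then `F` proves `(A ⊃' Q) ⊃' Q`; otherwise `insert A F` proves `Q` by
maximality, and the deduction theorem gives `A ⊃' Q`.
-/

namespace Deduces

variable {Γ Δ : Set Wf} {A B : Wf}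

theorem mono (hΓΔ : Γ ⊆ Δ) (h : Deduces Γ A) : Deduces Δ A := by
  induction h with
  | hyp hA => exact .hyp (hΓΔ hA)
  | ax1 A B => exact .ax1 A B
  | ax2 A B C => exact .ax2 A B C
  | peirce A B => exact .peirce A B
  | mp _ _ ihImp ihA => exact .mp ihImp ihA

theorem exists_finite_subset (h : Deduces Γ A) : ∃ Δ ⊆ Γ, Δ.Finite ∧ Deduces Δ A := by
  induction h with
  | @hyp A hA => exact ⟨{A}, Set.singleton_subset_iff.mpr hA, Set.finite_singleton A, .hyp rfl⟩
  | ax1 A B => exact ⟨∅, Set.empty_subset Γ, Set.finite_empty, .ax1 A B⟩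
  | ax2 A B C => exact ⟨∅, Set.empty_subset Γ, Set.finite_empty, .ax2 A B C⟩
  | peirce A B => exact ⟨∅, Set.empty_subset Γ, Set.finite_empty, .peirce A B⟩
  | mp _ _ ihImp ihA =>
    obtain ⟨Δ₁, hΔ₁Γ, hΔ₁fin, hImp⟩ := ihImp
    obtain ⟨Δ₂, hΔ₂Γ, hΔ₂fin, hA⟩ := ihA
    exact ⟨Δ₁ ∪ Δ₂, Set.union_subset hΔ₁Γ hΔ₂Γ, hΔ₁fin.union hΔ₂fin,
      .mp (hImp.mono Set.subset_union_left) (hA.mono Set.subset_union_right)⟩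

theorem imp_self (Γ : Set Wf) (A : Wf) : Deduces Γ (A ⊃' A) :=
  .mp (.mp (.ax2 A (A ⊃' A) A) (.ax1 A (A ⊃' A))) (.ax1 A A)

theorem imp_intro (A : Wf) (h : Deduces Γ B) : Deduces Γ (A ⊃' B) :=
  .mp (.ax1 B A) h

theorem deduction (h : Deduces (insert A Γ) B) : Deduces Γ (A ⊃' B) := by
  induction h with
  | hyp hB =>
    obtain rfl | hB := hB
    · exact imp_self Γ _
    · exact imp_intro A (.hyp hB)
  | ax1 B C => exact imp_intro A (.ax1 B C)
  | ax2 B C D => exact imp_intro A (.ax2 B C D)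
  | peirce B C => exact imp_intro A (.peirce B C)
  | mp _ _ ihImp ihB => exact .mp (.mp (.ax2 _ _ _) ihImp) ihB

theorem imp_imp (B : Wf) (h : Deduces Γ A) : Deduces Γ ((A ⊃' B) ⊃' B) :=
  deduction (.mp (.hyp (Set.mem_insert _ Γ)) (h.mono (Set.subset_insert _ Γ)))

end Deduces

/-- Q-consistency of the extension of IPC with extra axioms `Γ`: `Q` is not one of its theorems. -/
def QConsistent (Q : Wf) (Γ : Set Wf) : Prop :=
  ¬ Deduces Γ Q

/-- Q-completeness of the extension of IPC with extra axioms `Γ`: each wf `A` has `QQA` or `QA` as a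
theorem, where `QA` is `A ⊃' Q`. -/
def QComplete (Q : Wf) (Γ : Set Wf) : Prop :=
  ∀ A : Wf, Deduces Γ ((A ⊃' Q) ⊃' Q) ∨ Deduces Γ (A ⊃' Q)

theorem isOfFiniteCharacter_qConsistent (Q : Wf) :
    Order.IsOfFiniteCharacter {Γ | QConsistent Q Γ} := by
  refine fun Γ ↦ ⟨fun hΓ Δ hΔΓ _ hQ ↦ hΓ (hQ.mono hΔΓ), fun hfin hQ ↦ ?_⟩
  obtain ⟨Δ, hΔΓ, hΔfin, hΔQ⟩ := hQ.exists_finite_subset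
  exact hfin Δ hΔΓ hΔfin hΔQ

theorem qComplete_of_maximal_qConsistent {Q : Wf} {Γ : Set Wf} (hΓ : Maximal (QConsistent Q) Γ) :
    QComplete Q Γ := by
  intro A
  by_cases hA : A ∈ Γ
  · exact .inl (.imp_imp Q (.hyp hA))
  · have hQ : Deduces (insert A Γ) Q :=
      not_not.mp (hΓ.not_prop_of_gt (Set.ssubset_insert hA))
    exact .inr hQ.deduction

/-- Theorem 4 (Lindenbaum step): every Q-consistent extension M of IPC
(extra axioms E) has a Q-complete Q-consistent extension N (extra axioms F,
with E ⊆ F).  (The set of wfs is countable since variables are indexed by ℕ.) -/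
theorem stmt_12 (Q : Wf) (E : Set Wf) (hcons : ¬ Deduces E Q) :
    ∃ F : Set Wf, E ⊆ F ∧ ¬ Deduces F Q ∧
      ∀ A : Wf, Deduces F ((A ⊃' Q) ⊃' Q) ∨ Deduces F (A ⊃' Q) := by
  obtain ⟨F, hEF, hF⟩ := (isOfFiniteCharacter_qConsistent Q).exists_maximal hcons
  exact ⟨F, hEF, hF.prop, qComplete_of_maximal_qConsistent hF⟩
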